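/- Under Assumption 1, let the disturbance set be a finite union of boxes D = ∪_{i=1}^{n_D} D_i with D_i = {d : d̲^i ≤ d ≤ d̄^i}, d̲^i ≥ 0, and let {I_q}_{q∈Q} be a box partition of X. For q ∈ Q let cl(I_q) = {x : x̲_q ≤ x ≤ x̄_q}, and for each link l define ξ̲^l, ξ̄^l ∈ cl(I_q) by ξ̲^l_k = x̲_{q,k} for k ∈ L^down_l ∪ L^up_l and ξ̲^l_k = x̄_{q,k} for k ∈ L^adj_l, and symmetrically for ξ̄^l. Define P̄ost(cl(I_q), s) = ∪_{i=1}^{n_D} { x' : F_l(ξ̲^l, s, d̲^i) ≤ x'_l ≤ F_l(ξ̄^l, s, d̄^i) for all l ∈ L }, and declare a transition (q, s, q') of the finite state abstraction iff I_{q'} ∩ P̄ost(cl(I_q), s) ≠ ∅. Then (q, s, q') is a transition if and only if there exist d ∈ D and x' ∈ I_{q'} such that for every link l ∈ L there exists x ∈ cl(I_q) with x'_l = F_l(x, s, d). -/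

import Mathlib

open Finset
open scoped Classical

/-- Outflow `f^out_l(x, s)` of link `l` under signal `s`. -/
noncomputable def fout {L : Type*} [Fintype L]
    (c xcap : L → ℝ) (β α : L → L → ℝ) (s : Finset L)
    (x : L → ℝ) (l : L) : ℝ :=
  if l ∈ s then
    (Finset.univ.filter fun k => 0 < β l k).fold min (min (x l) (c l))
      fun k => α l k / β l k * (xcap k - x k)
  else 0

/-- Queue update `F_l(x, s, d)`, with `L^up_l = {j : η j = τ l}`. -/
noncomputable def Fupd {L V : Type*} [Fintype L]
    (η : L → V) (τ : L → Option V)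
    (c xcap : L → ℝ) (β α : L → L → ℝ) (s : Finset L)
    (x d : L → ℝ) (l : L) : ℝ :=
  min (xcap l)
    (x l - fout c xcap β α s x l
      + ∑ j ∈ Finset.univ.filter (fun j => τ l = some (η j)), β j l * fout c xcap β α s x j
      + d l)

/-!
The two sides agree because, for each link `l`, the image of a box of states and arrivals under
`F_l` is exactly the interval between the values at the two mixed corners. It contains that
interval by the intermediate value theorem. It lies in it because `F_l` increases in `x_l`, in the
upstream and the downstream queues, and decreases in the adjacent ones.

The delicate point is monotonicity in `x_l` itself: a longer queue `l` both sends more vehicles and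
admits fewer. The two effects are separated by `max(x_l, c_l)`: since
`x_l - min(x_l, c_l) = max(x_l, c_l) - c_l`, the vehicles left on `l` grow by at least the increment
of `max(x_l, c_l)`. By Assumption 1 the supply of `l` does not bind below `x_l = c_l`, so the
inflow from `j` falls by at most `α_{jl}` times that increment, and the `α_{jl}` sum to at most `1`.
-/

section Continuity

theorem continuous_finset_fold_min {X R ι : Type*} [TopologicalSpace X] [LinearOrder R]
    [TopologicalSpace R] [OrderClosedTopology R] (t : Finset ι) {b : X → R} {f : ι → X → R}
    (hb : Continuous b) (hf : ∀ k ∈ t, Continuous (f k)) :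
    Continuous fun x => t.fold min (b x) fun k => f k x := by
  induction t using Finset.induction_on with
  | empty => simpa using hb
  | insert k t hk ih =>
    simp only [fold_insert hk]
    exact (hf k (mem_insert_self k t)).min (ih fun m hm => hf m (mem_insert_of_mem hm))

variable {L V : Type*} [Fintype L] (η : L → V) (τ : L → Option V)
  (c xcap : L → ℝ) (β α : L → L → ℝ) (s : Finset L)

theorem continuous_fout (l : L) : Continuous fun x => fout c xcap β α s x l := by
  unfold fout
  split_ifs
  · exact continuous_finset_fold_min _ (by fun_prop) fun k _ => by fun_prop
  · exact continuous_const

theorem continuous_Fupd (l : L) :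
    Continuous fun p : (L → ℝ) × (L → ℝ) => Fupd η τ c xcap β α s p.1 p.2 l := by
  have hfout (j : L) : Continuous fun p : (L → ℝ) × (L → ℝ) => fout c xcap β α s p.1 j :=
    (continuous_fout c xcap β α s j).comp continuous_fst
  unfold Fupd
  fun_prop

end Continuity

section Outflow

variable {L : Type*} [Fintype L] {c xcap : L → ℝ} {β α : L → L → ℝ} {s : Finset L}
  {x y : L → ℝ} {l j : L}

theorem fout_of_notMem (hl : l ∉ s) : fout c xcap β α s x l = 0 :=
  if_neg hl

theorem le_fout_iff (hl : l ∈ s) {r : ℝ} :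
    r ≤ fout c xcap β α s x l ↔
      r ≤ x l ∧ r ≤ c l ∧ ∀ k, 0 < β l k → β l k * r ≤ α l k * (xcap k - x k) := by
  rw [fout, if_pos hl, le_fold_min, le_min_iff, and_assoc]
  refine and_congr_right' (and_congr_right' ?_)
  simp only [mem_filter, mem_univ, true_and]
  refine forall₂_congr fun k hk => ?_
  rw [div_mul_eq_mul_div, le_div_iff₀' hk]

theorem fout_le_queue (hl : l ∈ s) : fout c xcap β α s x l ≤ x l :=
  ((le_fout_iff hl).1 le_rfl).1

theorem fout_le_saturation (hl : l ∈ s) : fout c xcap β α s x l ≤ c l :=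
  ((le_fout_iff hl).1 le_rfl).2.1

theorem mul_fout_le_supply (hl : l ∈ s) {k : L} (hβ : 0 < β l k) :
    β l k * fout c xcap β α s x l ≤ α l k * (xcap k - x k) :=
  ((le_fout_iff hl).1 le_rfl).2.2 k hβ

theorem fout_le_fout_add_min_sub_min (hα : ∀ k, 0 ≤ α l k) (hl : x l ≤ y l)
    (hdown : ∀ k, 0 < β l k → x k ≤ y k) :
    fout c xcap β α s y l ≤ fout c xcap β α s x l + (min (y l) (c l) - min (x l) (c l)) := by
  have hmin : min (x l) (c l) ≤ min (y l) (c l) := min_le_min_right _ hl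
  by_cases hs : l ∈ s
  · have hdemand : fout c xcap β α s y l ≤ min (y l) (c l) :=
      le_min (fout_le_queue hs) (fout_le_saturation hs)
    rw [← sub_le_iff_le_add, le_fout_iff hs]
    refine ⟨by linarith [min_le_left (x l) (c l)], by linarith [min_le_right (x l) (c l)],
      fun k hk => ?_⟩
    calc β l k * (fout c xcap β α s y l - (min (y l) (c l) - min (x l) (c l)))
        ≤ β l k * fout c xcap β α s y l := by gcongr; linarith
      _ ≤ α l k * (xcap k - y k) := mul_fout_le_supply hs hk
      _ ≤ α l k * (xcap k - x k) := by
        gcongr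
        exacts [hα k, hdown k hk]
  · simpa [fout_of_notMem hs] using hmin

theorem mul_fout_le_mul_sub_max (hj : j ∈ s) (hβ : 0 < β j l)
    (hcap : β j l * c j ≤ α j l * (xcap l - c l)) :
    β j l * fout c xcap β α s x j ≤ α j l * (xcap l - max (x l) (c l)) := by
  rcases max_choice (x l) (c l) with h | h <;> rw [h]
  · exact mul_fout_le_supply hj hβ
  · exact (mul_le_mul_of_nonneg_left (fout_le_saturation hj) hβ.le).trans hcap

theorem mul_fout_le_mul_fout_add (hj : j ∈ s) (hβ : 0 ≤ β j l) (hα : ∀ k, 0 ≤ α j k)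
    (hcap : 0 < β j l → β j l * c j ≤ α j l * (xcap l - c l))
    (hl : x l ≤ y l) (hup : x j ≤ y j) (hadj : ∀ k ≠ l, 0 < β j k → y k ≤ x k) :
    β j l * fout c xcap β α s x j ≤
      β j l * fout c xcap β α s y j + α j l * (max (y l) (c l) - max (x l) (c l)) := by
  set δ := max (y l) (c l) - max (x l) (c l)
  have hαδ : 0 ≤ α j l * δ := mul_nonneg (hα l) (sub_nonneg.2 (max_le_max_right _ hl))
  rcases hβ.eq_or_lt with hβ0 | hβ0
  · simpa [← hβ0] using hαδ
  have hqueue : fout c xcap β α s x j ≤ x j := fout_le_queue hj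
  have hsat : fout c xcap β α s x j ≤ c j := fout_le_saturation hj
  have hε : 0 ≤ α j l * δ / β j l := div_nonneg hαδ hβ
  suffices fout c xcap β α s x j - α j l * δ / β j l ≤ fout c xcap β α s y j by
    have := mul_le_mul_of_nonneg_left this hβ
    rwa [mul_sub, mul_div_cancel₀ _ hβ0.ne', sub_le_iff_le_add] at this
  refine (le_fout_iff hj).2 ⟨by linarith, by linarith, fun k hk => ?_⟩
  obtain rfl | hkl := eq_or_ne k l
  · calc β j k * (fout c xcap β α s x j - α j k * δ / β j k)
        = β j k * fout c xcap β α s x j - α j k * δ := by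
          rw [mul_sub, mul_div_cancel₀ _ hβ0.ne']
      _ ≤ α j k * (xcap k - max (x k) (c k)) - α j k * δ :=
        sub_le_sub_right (mul_fout_le_mul_sub_max hj hβ0 (hcap hβ0)) _
      _ = α j k * (xcap k - max (y k) (c k)) := by ring
      _ ≤ α j k * (xcap k - y k) := by
        gcongr
        exacts [hα k, le_max_left _ _]
  · calc β j k * (fout c xcap β α s x j - α j l * δ / β j l)
        ≤ β j k * fout c xcap β α s x j := by gcongr; linarith
      _ ≤ α j k * (xcap k - x k) := mul_fout_le_supply hj hk
      _ ≤ α j k * (xcap k - y k) := by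
        gcongr
        exacts [hα k, hadj k hkl hk]

end Outflow

section MixedOrder

variable {L V R : Type*} {τ : L → Option V} {l : L} {a b x y : L → R}

/-- The order on states in which `F_l` is increasing: the usual order, reversed on `L^adj_l`. All
links outside `L^adj_l` count as increasing, so no separate class is needed for those that `F_l`
does not depend on. -/
structure MixedLE [LE R] (τ : L → Option V) (l : L) (x y : L → R) : Prop where
  self : x l ≤ y l
  of_ne : ∀ k, τ k ≠ τ l → x k ≤ y k
  of_adj : ∀ k ≠ l, τ k = τ l → y k ≤ x k

/-- The point with the coordinates of `a` on `L^adj_l` and those of `b` elsewhere. The paper's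
`ξ̲^l` and `ξ̄^l` are `mixedCorner τ l x̄_q x̲_q` and `mixedCorner τ l x̲_q x̄_q`. -/
noncomputable def mixedCorner (τ : L → Option V) (l : L) (a b : L → R) : L → R :=
  fun k => if k ≠ l ∧ τ k = τ l then a k else b k

theorem mixedCorner_mem_Icc [Preorder R] (ha : a ∈ Set.Icc x y) (hb : b ∈ Set.Icc x y) :
    mixedCorner τ l a b ∈ Set.Icc x y := by
  constructor <;> intro k <;> unfold mixedCorner <;> split_ifs
  exacts [ha.1 k, hb.1 k, ha.2 k, hb.2 k]

theorem mixedLE_mixedCorner_left [Preorder R] (hx : x ∈ Set.Icc a b) :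
    MixedLE τ l (mixedCorner τ l b a) x where
  self := by simpa [mixedCorner] using hx.1 l
  of_ne k hk := by simpa [mixedCorner, hk] using hx.1 k
  of_adj k hkl hk := by simpa [mixedCorner, hkl, hk] using hx.2 k

theorem mixedLE_mixedCorner_right [Preorder R] (hx : x ∈ Set.Icc a b) :
    MixedLE τ l x (mixedCorner τ l a b) where
  self := by simpa [mixedCorner] using hx.2 l
  of_ne k hk := by simpa [mixedCorner, hk] using hx.2 k
  of_adj k hkl hk := by simpa [mixedCorner, hkl, hk] using hx.1 k

end MixedOrder

/-- The standing assumptions on a network with signal input `s`, with Assumption 1 as the last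
one. The supply ratios of the actuated links into an intersection are only asked to sum to at most
`1`, which includes the empty sum at an intersection where no incoming link is actuated. -/
structure IsAdmissible {L V : Type*} [Fintype L] (η : L → V) (τ : L → Option V)
    (c xcap : L → ℝ) (β α : L → L → ℝ) (s : Finset L) : Prop where
  ne_upstream : ∀ l, some (η l) ≠ τ l
  turn_nonneg : ∀ l k, 0 ≤ β l k
  upstream_eq : ∀ l k, 0 < β l k → τ k = some (η l)
  supply_pos : ∀ l k, 0 < α l k
  sum_supply_le_one : ∀ k, ∑ j with j ∈ s ∧ some (η j) = τ k, α j k ≤ 1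
  saturation_le : ∀ l k, τ l = some (η k) → 0 < β k l → c l ≤ xcap l - β k l / α k l * c k

namespace IsAdmissible

variable {L V : Type*} [Fintype L] {η : L → V} {τ : L → Option V} {c xcap : L → ℝ}
  {β α : L → L → ℝ} {s : Finset L} {x y d e : L → ℝ} {l j : L}

theorem mul_saturation_le (h : IsAdmissible η τ c xcap β α s) (hβ : 0 < β j l) :
    β j l * c j ≤ α j l * (xcap l - c l) := by
  have hα := h.supply_pos j l
  rw [← div_le_iff₀' hα, mul_div_right_comm]
  linarith [h.saturation_le l j (h.upstream_eq j l hβ) hβ]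

theorem fout_le_of_mixedLE (h : IsAdmissible η τ c xcap β α s) (hxy : MixedLE τ l x y) :
    fout c xcap β α s y l ≤ fout c xcap β α s x l + (min (y l) (c l) - min (x l) (c l)) :=
  fout_le_fout_add_min_sub_min (fun k => (h.supply_pos l k).le) hxy.self fun k hk =>
    hxy.of_ne k (h.upstream_eq l k hk ▸ h.ne_upstream l)

theorem mul_fout_le_of_mixedLE (h : IsAdmissible η τ c xcap β α s) (hxy : MixedLE τ l x y)
    (hj : τ l = some (η j)) :
    β j l * fout c xcap β α s x j ≤ β j l * fout c xcap β α s y j +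
      if j ∈ s then α j l * (max (y l) (c l) - max (x l) (c l)) else 0 := by
  split_ifs with hs
  · exact mul_fout_le_mul_fout_add hs (h.turn_nonneg j l) (fun k => (h.supply_pos j k).le)
      h.mul_saturation_le hxy.self (hxy.of_ne j (hj ▸ (h.ne_upstream j).symm))
      fun k hkl hk => hxy.of_adj k hkl ((h.upstream_eq j k hk).trans hj.symm)
  · simp [fout_of_notMem hs]

theorem inflow_le_of_mixedLE (h : IsAdmissible η τ c xcap β α s) (hxy : MixedLE τ l x y) :
    ∑ j with τ l = some (η j), β j l * fout c xcap β α s x j ≤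
      (∑ j with τ l = some (η j), β j l * fout c xcap β α s y j) +
        (max (y l) (c l) - max (x l) (c l)) := by
  set δ := max (y l) (c l) - max (x l) (c l)
  have hδ0 : 0 ≤ δ := sub_nonneg.2 (max_le_max_right _ hxy.self)
  have hshares : ∑ j with τ l = some (η j), (if j ∈ s then α j l * δ else 0) ≤ δ :=
    calc ∑ j with τ l = some (η j), (if j ∈ s then α j l * δ else 0)
        = (∑ j with j ∈ s ∧ some (η j) = τ l, α j l) * δ := by
          rw [← sum_filter, filter_filter, sum_mul]
          simp only [and_comm, eq_comm]
      _ ≤ δ := mul_le_of_le_one_left hδ0 (h.sum_supply_le_one l)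
  calc ∑ j with τ l = some (η j), β j l * fout c xcap β α s x j
      ≤ ∑ j with τ l = some (η j),
          (β j l * fout c xcap β α s y j + if j ∈ s then α j l * δ else 0) :=
        sum_le_sum fun j hj => h.mul_fout_le_of_mixedLE hxy (mem_filter.1 hj).2
    _ ≤ _ := by rw [sum_add_distrib]; gcongr

theorem Fupd_le_Fupd_of_mixedLE (h : IsAdmissible η τ c xcap β α s) (hxy : MixedLE τ l x y)
    (hde : d l ≤ e l) : Fupd η τ c xcap β α s x d l ≤ Fupd η τ c xcap β α s y e l := by
  refine min_le_min_left _ ?_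
  linarith [h.fout_le_of_mixedLE hxy, h.inflow_le_of_mixedLE hxy,
    min_add_max (x l) (c l), min_add_max (y l) (c l)]

theorem image_Fupd_Icc_prod_Icc (h : IsAdmissible η τ c xcap β α s) {a b : L → ℝ}
    (hab : a ≤ b) (hde : d ≤ e) :
    (fun p : (L → ℝ) × (L → ℝ) => Fupd η τ c xcap β α s p.1 p.2 l) ''
        (Set.Icc a b ×ˢ Set.Icc d e) =
      Set.Icc (Fupd η τ c xcap β α s (mixedCorner τ l b a) d l)
        (Fupd η τ c xcap β α s (mixedCorner τ l a b) e l) := by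
  have ha : a ∈ Set.Icc a b := Set.left_mem_Icc.2 hab
  have hb : b ∈ Set.Icc a b := Set.right_mem_Icc.2 hab
  refine Set.Subset.antisymm ?_ ?_
  · rintro _ ⟨⟨x, f⟩, ⟨hx, hf⟩, rfl⟩
    exact ⟨h.Fupd_le_Fupd_of_mixedLE (mixedLE_mixedCorner_left hx) (hf.1 l),
      h.Fupd_le_Fupd_of_mixedLE (mixedLE_mixedCorner_right hx) (hf.2 l)⟩
  · have hconn : IsPreconnected (Set.Icc a b ×ˢ Set.Icc d e) :=
      ((convex_Icc a b).prod (convex_Icc d e)).isPreconnected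
    exact hconn.intermediate_value (a := (mixedCorner τ l b a, d)) (b := (mixedCorner τ l a b, e))
      ⟨mixedCorner_mem_Icc hb ha, Set.left_mem_Icc.2 hde⟩
      ⟨mixedCorner_mem_Icc ha hb, Set.right_mem_Icc.2 hde⟩
      (continuous_Fupd η τ c xcap β α s l).continuousOn

end IsAdmissible

theorem sum_le_one_of_nonempty {ι R : Type*} [Semiring R] [PartialOrder R] [ZeroLEOneClass R]
    {t : Finset ι} {f : ι → R} (h : t.Nonempty → ∑ j ∈ t, f j = 1) : ∑ j ∈ t, f j ≤ 1 := by
  rcases t.eq_empty_or_nonempty with rfl | ht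
  exacts [zero_le_one, (h ht).le]

theorem Fupd_congr_disturbance {L V : Type*} [Fintype L] {η : L → V} {τ : L → Option V}
    {c xcap : L → ℝ} {β α : L → L → ℝ} {s : Finset L} {x d e : L → ℝ} {l : L}
    (hde : d l = e l) : Fupd η τ c xcap β α s x d l = Fupd η τ c xcap β α s x e l := by
  simp only [Fupd, hde]

theorem cm_abstraction_transition_iff_general {L V ι : Type*} [Fintype L] {η : L → V}
    {τ : L → Option V} {c xcap : L → ℝ} {β α : L → L → ℝ} {s : Finset L}
    (h : IsAdmissible η τ c xcap β α s) {a b : L → ℝ} (hab : a ≤ b) (T : Set (L → ℝ))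
    {dlo dhi : ι → L → ℝ} (hd : ∀ i, dlo i ≤ dhi i) :
    (T ∩ ⋃ i, {x' : L → ℝ | ∀ l,
        Fupd η τ c xcap β α s (mixedCorner τ l b a) (dlo i) l ≤ x' l ∧
        x' l ≤ Fupd η τ c xcap β α s (mixedCorner τ l a b) (dhi i) l}).Nonempty
      ↔ ∃ d ∈ ⋃ i, Set.Icc (dlo i) (dhi i), ∃ x' ∈ T, ∀ l, ∃ x : L → ℝ,
          a ≤ x ∧ x ≤ b ∧ x' l = Fupd η τ c xcap β α s x d l := by
  constructor
  · rintro ⟨x', hT, hpost⟩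
    obtain ⟨i, hi⟩ := Set.mem_iUnion.1 hpost
    have hreach (l : L) : ∃ p ∈ Set.Icc a b ×ˢ Set.Icc (dlo i) (dhi i),
        Fupd η τ c xcap β α s p.1 p.2 l = x' l :=
      (h.image_Fupd_Icc_prod_Icc hab (hd i)).symm.subset (hi l)
    choose p hp hpx using hreach
    -- `F_l` sees only the `l`-th arrival, so the arrivals found link by link combine into one.
    refine ⟨fun l => (p l).2 l,
      Set.mem_iUnion.2 ⟨i, fun l => (hp l).2.1 l, fun l => (hp l).2.2 l⟩, x', hT, fun l => ?_⟩
    exact ⟨(p l).1, (hp l).1.1, (hp l).1.2, (hpx l).symm.trans (Fupd_congr_disturbance rfl)⟩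
  · rintro ⟨d, hdD, x', hT, hx'⟩
    obtain ⟨i, hi⟩ := Set.mem_iUnion.1 hdD
    refine ⟨x', hT, Set.mem_iUnion.2 ⟨i, fun l => ?_⟩⟩
    obtain ⟨x, hax, hxb, hx⟩ := hx' l
    exact (h.image_Fupd_Icc_prod_Icc hab (hd i)).subset ⟨(x, d), ⟨⟨hax, hxb⟩, hi⟩, hx.symm⟩

/-- **Corollary 2.** Under Assumption 1, with disturbance set
`D = ⋃ i, [d̲ⁱ, d̄ⁱ]` and a box partition `{I q}` of `X` with corners `lo q, hi q`
(so `cl(I q) = Icc (lo q) (hi q)`), the CM-induced abstraction has a transition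
`(q, s, q')` — i.e. `I q' ∩ P̄ost(cl(I q), s) ≠ ∅` — if and only if there exist
`d ∈ D` and `x' ∈ I q'` such that for every link `l` there exists `x ∈ cl(I q)` with
`x' l = F_l(x, s, d)`. -/
theorem cm_abstraction_transition_iff {L V : Type*} [Fintype L]
    (η : L → V) (τ : L → Option V) (hself : ∀ l, some (η l) ≠ τ l)
    (c xcap : L → ℝ) (hc : ∀ l, 0 < c l) (hcap : ∀ l, 0 < xcap l)
    (β : L → L → ℝ) (hβ : ∀ l k, 0 ≤ β l k)
    (hβsupp : ∀ l k, 0 < β l k → τ k = some (η l))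
    (hβsum : ∀ l, ∑ k ∈ Finset.univ.filter (fun k => τ k = some (η l)), β l k ≤ 1)
    (s : Finset L) (α : L → L → ℝ) (hα : ∀ l k, 0 < α l k)
    (hαsum : ∀ k, (Finset.univ.filter fun j => j ∈ s ∧ some (η j) = τ k).Nonempty →
      ∑ j ∈ Finset.univ.filter (fun j => j ∈ s ∧ some (η j) = τ k), α j k = 1)
    (hA1 : ∀ l k, τ l = some (η k) → 0 < β k l → c l ≤ xcap l - β k l / α k l * c k)
    (Q : Type*) [Fintype Q] (I : Q → Set (L → ℝ)) (lo hi : Q → L → ℝ)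
    (hne : ∀ q, (I q).Nonempty)
    (hsub : ∀ q, I q ⊆ Set.Icc (lo q) (hi q))
    (hcl : ∀ q, closure (I q) = Set.Icc (lo q) (hi q))
    (hcover : (⋃ q, I q) = Set.Icc (0 : L → ℝ) xcap)
    (hdisj : ∀ q q', q ≠ q' → Disjoint (I q) (I q'))
    (nD : ℕ) (dlo dhi : Fin nD → L → ℝ)
    (hdlo : ∀ i l, 0 ≤ dlo i l) (hdbox : ∀ i, dlo i ≤ dhi i)
    (D : Set (L → ℝ)) (hD : D = ⋃ i : Fin nD, Set.Icc (dlo i) (dhi i))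
    (q q' : Q) :
    (I q' ∩
        ⋃ i : Fin nD, {x' : L → ℝ | ∀ l,
          Fupd η τ c xcap β α s
              (fun k => if k ≠ l ∧ τ k = τ l then hi q k else lo q k) (dlo i) l ≤ x' l ∧
          x' l ≤ Fupd η τ c xcap β α s
              (fun k => if k ≠ l ∧ τ k = τ l then lo q k else hi q k) (dhi i) l}).Nonempty
      ↔ ∃ d ∈ D, ∃ x' ∈ I q', ∀ l, ∃ x : L → ℝ,
          lo q ≤ x ∧ x ≤ hi q ∧ x' l = Fupd η τ c xcap β α s x d l := by
  exact hD ▸ cm_abstraction_transition_iff_general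
    ⟨hself, hβ, hβsupp, hα, fun k => sum_le_one_of_nonempty (hαsum k), hA1⟩
    (Set.nonempty_Icc.1 ((hne q).mono (hsub q))) (I q') hdbox
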